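/- Under Assumption (A), with t0 > 0 and x0 < b(t0), every (P1)-admissible finite nonnegative Borel measure λ on (0,t0] satisfies λ([t0−ε, t0]) > 0 for every ε ∈ (0,t0). -/

import Mathlib

open MeasureTheory Set Filter
open scoped ENNReal NNReal Topology

noncomputable def rTheta (θ t x : ℝ) : ℝ := Real.exp (-θ ^ 2 / (2 * t) + θ * x / t)

/-!
For `t > 0`, `log (r_θ(t, x)) = -θ² / (2t) + O(θ)`, so at a larger time `r_θ` decays strictly more
slowly as `θ → ∞`, whatever the positions are. If `λ` did not charge `[s, t₀]`, then
`∫ r_θ(t, b(t)) λ(dt)` would be at most `λ((0, s)) · r_θ(s, M)` for large `θ`, where `M` bounds `b`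
from above, and this is eventually smaller than `r_θ(t₀, x₀)`.
-/

theorem rTheta_pos (θ t x : ℝ) : 0 < rTheta θ t x :=
  Real.exp_pos _

theorem rTheta_monotone_space {θ t : ℝ} (hθ : 0 ≤ θ) (ht : 0 ≤ t) : Monotone (rTheta θ t) := by
  intro x y hxy
  unfold rTheta
  gcongr

theorem rTheta_monotoneOn_time {θ x : ℝ} (hθ : 0 ≤ θ) (hx : 2 * x ≤ θ) :
    MonotoneOn (fun t ↦ rTheta θ t x) (Ioi 0) := by
  intro s (hs : 0 < s) t (ht : 0 < t) hst
  have exponent_eq {u : ℝ} (hu : 0 < u) :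
      -θ ^ 2 / (2 * u) + θ * x / u = -(θ * (θ - 2 * x) / (2 * u)) := by
    field_simp
    ring
  have hnum : 0 ≤ θ * (θ - 2 * x) := mul_nonneg hθ (sub_nonneg.2 hx)
  simp only [rTheta, exponent_eq hs, exponent_eq ht]
  exact Real.exp_le_exp.2 <| neg_le_neg <|
    div_le_div_of_nonneg_left hnum (by positivity) (by gcongr)

theorem rTheta_isLittleO_rTheta {s t : ℝ} (hs : 0 < s) (hst : s < t) (x y : ℝ) :
    (fun θ ↦ rTheta θ s y) =o[atTop] (fun θ ↦ rTheta θ t x) := by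
  have hrate : 0 < (1 / s - 1 / t) / 2 :=
    half_pos (sub_pos.2 (one_div_lt_one_div_of_lt hs hst))
  have hlinear : Tendsto (fun θ ↦ (1 / s - 1 / t) / 2 * θ + (x / t - y / s)) atTop atTop :=
    tendsto_atTop_add_const_right _ _ (tendsto_id.const_mul_atTop hrate)
  refine Real.isLittleO_exp_comp_exp_comp.2 ((tendsto_id.atTop_mul_atTop₀ hlinear).congr ?_)
  intro θ
  have ht : 0 < t := hs.trans hst
  simp only [id_eq]
  field_simp
  ring

theorem setLIntegral_rTheta_le {b : ℝ → ℝ} {lam : Measure ℝ} {s M θ : ℝ}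
    (hb : ∀ t ∈ Ioo 0 s, b t ≤ M) (hθ : 0 ≤ θ) (hM : 2 * M ≤ θ) :
    ∫⁻ t in Ioo 0 s, ENNReal.ofReal (rTheta θ t (b t)) ∂lam ≤
      ENNReal.ofReal (rTheta θ s M) * lam (Ioo 0 s) := by
  rw [← setLIntegral_const]
  refine setLIntegral_mono' measurableSet_Ioo fun t ht ↦ ENNReal.ofReal_le_ofReal ?_
  calc
    rTheta θ t (b t) ≤ rTheta θ t M := rTheta_monotone_space hθ ht.1.le (hb t ht)
    _ ≤ rTheta θ s M := rTheta_monotoneOn_time hθ hM ht.1 (ht.1.trans ht.2) ht.2.le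

theorem eventually_setLIntegral_rTheta_lt {b : ℝ → ℝ} {lam : Measure ℝ} {s t : ℝ}
    (hs : 0 < s) (hst : s < t) (hb : BddAbove (b '' Ioo 0 s)) (hlam : lam (Ioo 0 s) ≠ ∞) (x : ℝ) :
    ∀ᶠ θ in atTop, ∫⁻ u in Ioo 0 s, ENNReal.ofReal (rTheta θ u (b u)) ∂lam <
      ENNReal.ofReal (rTheta θ t x) := by
  obtain ⟨M, hM⟩ := hb
  have hbM : ∀ u ∈ Ioo 0 s, b u ≤ M := fun u hu ↦ hM (mem_image_of_mem b hu)
  have hsmall := ((rTheta_isLittleO_rTheta hs hst x M).const_mul_left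
    (lam.real (Ioo 0 s))).def one_half_pos
  filter_upwards [hsmall, eventually_ge_atTop 0, eventually_ge_atTop (2 * M)] with θ hle hθ hθM
  calc
    ∫⁻ u in Ioo 0 s, ENNReal.ofReal (rTheta θ u (b u)) ∂lam
      ≤ ENNReal.ofReal (rTheta θ s M) * lam (Ioo 0 s) := setLIntegral_rTheta_le hbM hθ hθM
    _ = ENNReal.ofReal (lam.real (Ioo 0 s) * rTheta θ s M) := by
      rw [ENNReal.ofReal_mul measureReal_nonneg, ofReal_measureReal hlam, mul_comm]
    _ ≤ ENNReal.ofReal (1 / 2 * rTheta θ t x) := by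
      refine ENNReal.ofReal_le_ofReal ((le_abs_self _).trans ?_)
      simpa only [Real.norm_eq_abs, abs_of_pos (rTheta_pos θ t x)] using hle
    _ < ENNReal.ofReal (rTheta θ t x) := by
      have hpos := rTheta_pos θ t x
      exact (ENNReal.ofReal_lt_ofReal_iff hpos).2 (by linarith)

theorem stmt_13_general {b : ℝ → ℝ} {t0 x0 : ℝ} (hb : BddAbove (b '' Ioc 0 t0))
    {lam : Measure ℝ} [IsFiniteMeasure lam] (hlam : lam (Ioc 0 t0)ᶜ = 0)
    (hadm : ∃ᶠ θ in atTop,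
      ENNReal.ofReal (rTheta θ t0 x0) ≤ ∫⁻ t, ENNReal.ofReal (rTheta θ t (b t)) ∂lam) :
    ∀ ε ∈ Ioo 0 t0, 0 < lam (Icc (t0 - ε) t0) := by
  rintro ε ⟨hε, hεt⟩
  by_contra! hnull
  have hmem : ∀ᵐ t ∂lam, t ∈ Ioo 0 (t0 - ε) := by
    filter_upwards [mem_ae_iff.2 hlam, measure_eq_zero_iff_ae_notMem.1 (nonpos_iff_eq_zero.1 hnull)]
      with t ht hnotMem
    exact ⟨ht.1, not_le.1 fun hle ↦ hnotMem ⟨hle, ht.2⟩⟩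
  have hsub : Ioo 0 (t0 - ε) ⊆ Ioc 0 t0 := fun t ht ↦ ⟨ht.1, by linarith [ht.2]⟩
  have hlt := eventually_setLIntegral_rTheta_lt (sub_pos.2 hεt) (sub_lt_self t0 hε)
    (hb.mono (image_mono hsub)) (measure_ne_top lam _) x0
  rw [Measure.restrict_eq_self_of_ae_mem hmem] at hlt
  obtain ⟨θ, hle, hlt⟩ := (hadm.and_eventually hlt).exists
  exact hle.not_gt hlt

theorem stmt_13 (b : ℝ → ℝ)
    (hba : AnalyticOnNhd ℝ b (Set.Ici 0)) (hbconc : ConcaveOn ℝ (Set.Ici 0) b)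
    (hb0 : 0 < b 0) (hbderiv : ∃ d : ℝ, HasDerivWithinAt b d (Set.Ici 0) 0)
    (t0 x0 : ℝ) (ht0 : 0 < t0) (hx0 : x0 < b t0)
    (lam : Measure ℝ) [IsFiniteMeasure lam] (hlamsupp : lam (Set.Ioc 0 t0)ᶜ = 0)
    (hlamadm : ∀ θ ∈ Set.Ici (2 * b 0),
      ENNReal.ofReal (rTheta θ t0 x0) ≤ ∫⁻ t, ENNReal.ofReal (rTheta θ t (b t)) ∂lam) :
    ∀ ε ∈ Set.Ioo 0 t0, 0 < lam (Set.Icc (t0 - ε) t0) := by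
  have hb : BddAbove (b '' Ioc 0 t0) :=
    (isCompact_Icc.bddAbove_image (hba.continuousOn.mono Icc_subset_Ici_self)).mono
      (image_mono Ioc_subset_Icc_self)
  exact stmt_13_general hb hlamsupp ((eventually_ge_atTop (2 * b 0)).mono hlamadm).frequently
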